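/- arXiv:1108.4593 — 3 statements merged into one kernel-verified Lean document; each statement's English description precedes it below -/
import Mathlib

section
/- All roots of a polynomial are rational functions of its resolvent: let p ∈ ℚ[X] be a polynomial of degree n with n distinct complex roots r_1, ..., r_n, and let a_1, ..., a_n ∈ ℚ be such that the map σ ↦ Σ_i a_i r_{σ(i)} from S_n to ℂ is injective. Set V = a_1 r_1 + ... + a_n r_n. Then each root r_i lies in the subfield ℚ(V) of ℂ; equivalently, ℚ(r_1, ..., r_n) = ℚ(V). -/
open Polynomial

/-- A separable element `x` of an algebraically closed extension `L` of `K` all of whose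
conjugates equal `x` lies in `K`. -/
theorem mem_range_algebraMap_of_forall_conjugate_eq {K L : Type*} [Field K] [Field L]
    [Algebra K L] [IsAlgClosed L] {x : L} (hsep : IsSeparable K x)
    (hconj : ∀ y, aeval y (minpoly K x) = 0 → y = x) : x ∈ (algebraMap K L).range := by
  by_contra hx
  obtain ⟨y, hne, hy⟩ := (notMem_iff_exists_ne_and_isConjRoot hsep (IsAlgClosed.splits _)).1
    (fun h => hx (Algebra.mem_bot.1 h))
  exact hne (hconj y (hy.aeval_eq_zero)).symm

/-- A polynomial with as many distinct listed roots as its degree has no further roots. -/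
theorem mem_range_of_aeval_eq_zero_of_natDegree_eq {F L : Type*} [Field F] [Field L]
    [Algebra F L] {n : ℕ} {p : F[X]} (hp : p ≠ 0) (hdeg : p.natDegree = n) {r : Fin n → L}
    (hr : Function.Injective r) (hroots : ∀ i, aeval (r i) p = 0) {y : L}
    (hy : aeval y p = 0) : y ∈ Set.range r := by
  classical
  have hsub : Finset.univ.image r ⊆ (p.aroots L).toFinset := by
    intro z hz
    obtain ⟨i, -, rfl⟩ := Finset.mem_image.1 hz
    simpa [hp] using hroots i
  have hle : (p.aroots L).toFinset.card ≤ (Finset.univ.image r).card := by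
    rw [Finset.card_image_of_injective _ hr, Finset.card_univ, Fintype.card_fin, ← hdeg]
    refine (Multiset.toFinset_card_le _).trans ((card_roots' _).trans ?_)
    exact natDegree_map_le
  have hmem : y ∈ (p.aroots L).toFinset := by simpa [hp] using hy
  rw [← Finset.eq_of_subset_of_card_le hsub hle] at hmem
  simpa using hmem

/-- All roots of a polynomial are rational functions of its resolvent: if `p ∈ ℚ[X]` has
degree `n` and `n` distinct complex roots `r_1, ..., r_n`, and the resolvent
`V = Σ_i a_i r_i` takes pairwise distinct values under all permutations of the roots,
then each root lies in `ℚ(V)`; equivalently `ℚ(r_1, ..., r_n) = ℚ(V)`. -/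
theorem roots_mem_adjoin_resolvent (n : ℕ) (p : Polynomial ℚ)
    (hdeg : p.natDegree = n) (r : Fin n → ℂ) (hr : Function.Injective r)
    (hroots : ∀ i, Polynomial.aeval (r i) p = 0) (a : Fin n → ℚ)
    (hres : Function.Injective
      (fun σ : Equiv.Perm (Fin n) => ∑ i, (a i : ℂ) * r (σ i))) :
    (∀ i, r i ∈ IntermediateField.adjoin ℚ {∑ i, (a i : ℂ) * r i}) ∧
    IntermediateField.adjoin ℚ (Set.range r) =
      IntermediateField.adjoin ℚ {∑ i, (a i : ℂ) * r i} := by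
  have hmem : ∀ i, r i ∈ IntermediateField.adjoin ℚ {∑ i, (a i : ℂ) * r i} := by
    intro i
    set V : ℂ := ∑ i, (a i : ℂ) * r i with hV
    set K := IntermediateField.adjoin ℚ {V}
    have hp : p ≠ 0 := by
      rintro rfl
      rw [natDegree_zero] at hdeg
      exact (Fin.cast hdeg.symm i).elim0
    have hint : ∀ j, IsIntegral K (r j) := fun j =>
      (IsAlgebraic.isIntegral ⟨p, hp, hroots j⟩ : IsIntegral ℚ (r j)).tower_top
    have hsep : IsSeparable K (r i) := (minpoly.irreducible (hint i)).separable
    suffices h : r i ∈ (algebraMap K ℂ).range by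
      obtain ⟨x, hx⟩ := h
      exact hx ▸ x.2
    refine mem_range_algebraMap_of_forall_conjugate_eq hsep fun y hy => ?_
    have hgen : ∀ j, r j ∈ IntermediateField.adjoin K (Set.range r) := fun j =>
      IntermediateField.subset_adjoin _ _ ⟨j, rfl⟩
    obtain ⟨φ, hφ⟩ := IntermediateField.exists_algHom_adjoin_of_splits_of_aeval
      (F := K) (S := Set.range r) (K := ℂ)
      (by rintro _ ⟨j, rfl⟩; exact ⟨hint j, IsAlgClosed.splits _⟩) (hgen i) hy
    let s : Fin n → IntermediateField.adjoin K (Set.range r) := fun j => ⟨r j, hgen j⟩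
    have hs : Function.Injective s := fun j k h => hr (congrArg Subtype.val h)
    have hφroot : ∀ j, ∃ k, r k = φ (s j) := by
      intro j
      refine mem_range_of_aeval_eq_zero_of_natDegree_eq hp hdeg hr hroots ?_
      have hsj : aeval (s j) p = 0 := Subtype.ext
        ((aeval_algHom_apply ((IntermediateField.val _).restrictScalars ℚ) (s j) p).symm.trans
          (hroots j))
      have := aeval_algHom_apply (φ.restrictScalars ℚ) (s j) p
      rw [hsj, map_zero] at this
      exact this
    choose f hf using hφroot
    have hfinj : Function.Injective f := fun j k h =>
      hs (φ.toRingHom.injective ((hf j).symm.trans ((congrArg r h).trans (hf k))))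
    let σ : Equiv.Perm (Fin n) := Equiv.ofBijective f (Finite.injective_iff_bijective.1 hfinj)
    have hVK : V ∈ K := IntermediateField.mem_adjoin_simple_self ℚ V
    have hVs : algebraMap K (IntermediateField.adjoin K (Set.range r)) ⟨V, hVK⟩ =
        ∑ j, (a j : IntermediateField.adjoin K (Set.range r)) * s j :=
      Subtype.ext (by simp [s, hV])
    have hσV : ∑ j, (a j : ℂ) * r (σ j) = V := by
      have := φ.commutes ⟨V, hVK⟩
      rw [hVs, map_sum] at this
      simpa [σ, hf] using this
    have hσ : σ = 1 := hres (by simpa using hσV)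
    have hfi : f i = i := congrArg (fun τ : Equiv.Perm (Fin n) => τ i) hσ
    rw [← hφ, ← hfi]
    exact (congrArg φ (by simp [s, hfi])).trans (hf i).symm
  refine ⟨hmem, le_antisymm ?_ ?_⟩
  · rw [IntermediateField.adjoin_le_iff]
    rintro _ ⟨i, rfl⟩
    exact hmem i
  · rw [IntermediateField.adjoin_simple_le_iff]
    refine sum_mem fun i _ => mul_mem ?_ (IntermediateField.subset_adjoin _ _ ⟨i, rfl⟩)
    exact (IntermediateField.adjoin ℚ (Set.range r)).algebraMap_mem (a i)
end

section
/- Resolvents differing by a permutation of the roots are rational functions of one another: let p ∈ ℚ[X] be a polynomial of degree n with n distinct complex roots r_1, ..., r_n, and let a_1, ..., a_n ∈ ℚ be such that the map σ ↦ Σ_i a_i r_{σ(i)} from S_n to ℂ is injective. Set V = a_1 r_1 + ... + a_n r_n. Then for every permutation σ ∈ S_n, the value V_σ = Σ_i a_i r_{σ(i)} lies in the subfield ℚ(V) of ℂ. -/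
open Polynomial

/-- In a finite Galois extension, `y` lies in `F⟮x⟯` as soon as every automorphism
fixing `x` fixes `y`. -/
theorem IsGalois.mem_adjoin_simple_of_forall_fixed {F L : Type*} [Field F] [Field L]
    [Algebra F L] [FiniteDimensional F L] [IsGalois F L] {x y : L}
    (h : ∀ τ : L ≃ₐ[F] L, τ x = x → τ y = y) : y ∈ IntermediateField.adjoin F {x} := by
  rw [← IsGalois.fixedField_fixingSubgroup (IntermediateField.adjoin F {x}),
    IntermediateField.mem_fixedField_iff]
  intro τ hτ
  exact h τ ((IntermediateField.mem_fixingSubgroup_iff _ τ).1 hτ x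
    (IntermediateField.mem_adjoin_simple_self F x))

/-- An injective family of `p.natDegree` roots of `p ≠ 0` exhausts the roots of `p`. -/
theorem Polynomial.rootSet_eq_range_of_injective {F L : Type*} [Field F] [Field L]
    [Algebra F L] {n : ℕ} {p : F[X]} (hp : p ≠ 0) (hdeg : p.natDegree = n) {r : Fin n → L}
    (hr : Function.Injective r) (hroots : ∀ i, aeval (r i) p = 0) :
    p.rootSet L = Set.range r := by
  classical
  have hsub : Finset.univ.image r ⊆ (p.aroots L).toFinset := by
    intro x hx
    obtain ⟨i, -, rfl⟩ := Finset.mem_image.1 hx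
    simp [hp, hroots i]
  have hcard : (p.aroots L).toFinset.card ≤ (Finset.univ.image r).card := by
    rw [Finset.card_image_of_injective _ hr, Finset.card_fin, ← hdeg]
    exact (Multiset.toFinset_card_le _).trans
      ((card_roots' _).trans (natDegree_map_le))
  rw [rootSet_def, ← Finset.eq_of_subset_of_card_le hsub hcard]
  simp

/-- An automorphism permutes a family enumerating the roots of a polynomial. -/
theorem AlgEquiv.exists_perm_of_rootSet_eq_range {F L ι : Type*} [Field F] [Field L]
    [Algebra F L] [Finite ι] {p : F[X]} {r : ι → L} (hr : Function.Injective r)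
    (hroots : p.rootSet L = Set.range r) (τ : L ≃ₐ[F] L) :
    ∃ π : Equiv.Perm ι, ∀ i, τ (r i) = r (π i) := by
  have hmem (i : ι) : ∃ j, τ (r i) = r j := by
    have hi : r i ∈ p.rootSet L := hroots ▸ Set.mem_range_self i
    have hτ : τ (r i) ∈ p.rootSet L := by
      rw [mem_rootSet] at hi ⊢
      exact ⟨hi.1, by rw [aeval_algHom_apply, hi.2, map_zero]⟩
    rw [hroots] at hτ
    obtain ⟨j, hj⟩ := hτ
    exact ⟨j, hj.symm⟩
  choose f hf using hmem
  have hinj : Function.Injective f := fun i j hij =>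
    hr (τ.injective (by rw [hf, hf, hij]))
  exact ⟨Equiv.ofBijective f (Finite.injective_iff_bijective.1 hinj), hf⟩

/-- In a finite Galois extension containing all roots of `p`, every permuted resolvent
lies in the field generated by the resolvent. -/
theorem IsGalois.permuted_resolvent_mem_adjoin {F L ι : Type*} [Field F] [Field L]
    [Algebra F L] [FiniteDimensional F L] [IsGalois F L] [Fintype ι] {p : F[X]} {r : ι → L}
    (hr : Function.Injective r) (hroots : p.rootSet L = Set.range r) (a : ι → F)
    (hres : Function.Injective fun σ : Equiv.Perm ι => ∑ i, algebraMap F L (a i) * r (σ i))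
    (σ : Equiv.Perm ι) :
    ∑ i, algebraMap F L (a i) * r (σ i) ∈
      IntermediateField.adjoin F {∑ i, algebraMap F L (a i) * r i} := by
  refine IsGalois.mem_adjoin_simple_of_forall_fixed fun τ hτ => ?_
  obtain ⟨π, hπ⟩ := τ.exists_perm_of_rootSet_eq_range hr hroots
  have hone : π = 1 := hres (by simpa [hπ] using hτ)
  simp [hπ, hone]

/-- Permuted resolvents over a characteristic zero field, with values in an algebraically
closed extension. -/
theorem IsAlgClosed.permuted_resolvent_mem_adjoin {F Ω : Type*} [Field F] [CharZero F]
    [Field Ω] [IsAlgClosed Ω] [Algebra F Ω] {n : ℕ} {p : F[X]} (hp : p ≠ 0)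
    (hdeg : p.natDegree = n) {r : Fin n → Ω} (hr : Function.Injective r)
    (hroots : ∀ i, aeval (r i) p = 0) (a : Fin n → F)
    (hres : Function.Injective
      fun σ : Equiv.Perm (Fin n) => ∑ i, algebraMap F Ω (a i) * r (σ i))
    (σ : Equiv.Perm (Fin n)) :
    ∑ i, algebraMap F Ω (a i) * r (σ i) ∈
      IntermediateField.adjoin F {∑ i, algebraMap F Ω (a i) * r i} := by
  have hrange := rootSet_eq_range_of_injective hp hdeg hr hroots
  let E := IntermediateField.adjoin F (p.rootSet Ω)
  have : p.IsSplittingField F E :=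
    IntermediateField.adjoin_rootSet_isSplittingField (IsAlgClosed.splits _)
  have : FiniteDimensional F E := IsSplittingField.finiteDimensional E p
  have : Normal F E := Normal.of_isSplittingField p
  have : IsGalois F E := ⟨⟩
  let s : Fin n → E := fun i =>
    ⟨r i, IntermediateField.subset_adjoin F _ (hrange ▸ Set.mem_range_self i)⟩
  have hs : Function.Injective s := fun i j hij => hr (congrArg Subtype.val hij)
  have hval (π : Equiv.Perm (Fin n)) :
      E.val (∑ i, algebraMap F E (a i) * s (π i)) = ∑ i, algebraMap F Ω (a i) * r (π i) := by
    simp only [s, map_sum, map_mul, AlgHom.commutes]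
    rfl
  have hroot (i : Fin n) : aeval (s i) p = 0 :=
    Subtype.val_injective ((aeval_algHom_apply E.val (s i) p).symm.trans (hroots i))
  have hmem := IsGalois.permuted_resolvent_mem_adjoin hs
    (rootSet_eq_range_of_injective hp hdeg hs hroot) a
    (fun π ρ h => hres (by simpa only [hval] using congrArg E.val h)) σ
  have hmap := (IntermediateField.mem_map _).2 ⟨_, hmem, hval σ⟩
  rw [IntermediateField.adjoin_map, Set.image_singleton] at hmap
  exact (hval 1) ▸ hmap

/-- Resolvents differing by a permutation of the roots are rational functions of one
another: with `p`, `r`, `a`, `V = Σ_i a_i r_i` as in the resolvent setup, for every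
permutation `σ` the value `V_σ = Σ_i a_i r_{σ(i)}` lies in `ℚ(V)`. -/
theorem permuted_resolvent_mem_adjoin_resolvent (n : ℕ) (p : Polynomial ℚ)
    (hdeg : p.natDegree = n) (r : Fin n → ℂ) (hr : Function.Injective r)
    (hroots : ∀ i, Polynomial.aeval (r i) p = 0) (a : Fin n → ℚ)
    (hres : Function.Injective
      (fun σ : Equiv.Perm (Fin n) => ∑ i, (a i : ℂ) * r (σ i))) :
    ∀ σ : Equiv.Perm (Fin n),
      (∑ i, (a i : ℂ) * r (σ i)) ∈
        IntermediateField.adjoin ℚ {∑ i, (a i : ℂ) * r i} := by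
  intro σ
  rcases eq_or_ne p 0 with rfl | hp
  · obtain rfl : n = 0 := by simpa using hdeg.symm
    simp
  · simpa using IsAlgClosed.permuted_resolvent_mem_adjoin hp hdeg hr hroots a
      (by simpa using hres) σ
end

section
/- The (p−1)-th power of the Lagrange resolvent of a prime cyclotomic equation is a known quantity: let p be an odd prime, ζ ∈ ℂ a primitive p-th root of unity, β ∈ ℂ a primitive (p−1)-th root of unity, and g an integer that is a primitive root modulo p. Define t = Σ_{k=0}^{p−2} β^k ζ^{g^k}. Then t^{p−1} lies in the cyclotomic field ℚ(β). -/
/-- The Gauss sum of a multiplicative character `χ` of order `n ≥ 2` on a finite field, raised to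
the power `n`, lies in `ℤ[μ]`, where `μ` is a primitive `n`-th root of unity. -/
lemma gaussSum_pow_orderOf_mem_algebraAdjoin {F R : Type*} [Fintype F] [Field F] [CommRing R]
    [IsDomain R] {χ : MulChar F R} {ψ : AddChar F R} {μ : R} (hχ : 2 ≤ orderOf χ)
    (hψ : ψ.IsPrimitive) (hμ : IsPrimitiveRoot μ (orderOf χ)) :
    gaussSum χ ψ ^ orderOf χ ∈ Algebra.adjoin ℤ {μ} := by
  have : NeZero (orderOf χ) := ⟨by lia⟩
  rw [gaussSum_pow_eq_prod_jacobiSum hχ hψ]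
  refine mul_mem (mul_mem (MulChar.apply_mem_algebraAdjoin hμ _) (natCast_mem _ _))
    (prod_mem fun i _ ↦ jacobiSum_mem_algebraAdjoin_of_pow_eq_one (pow_orderOf_eq_one χ) ?_ hμ)
  rw [← pow_mul, mul_comm, pow_mul, pow_orderOf_eq_one, one_pow]

/-- A sum over a finite field of a function vanishing at `0` is the sum over the powers of a
primitive root. -/
lemma IsPrimitiveRoot.sum_eq_sum_range_pow {F M : Type*} [Fintype F] [Field F] [AddCommMonoid M]
    {g : F} (hg : IsPrimitiveRoot g (Fintype.card F - 1)) {f : F → M} (hf : f 0 = 0) :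
    ∑ a, f a = ∑ k ∈ Finset.range (Fintype.card F - 1), f (g ^ k) := by
  classical
  have : NeZero (Fintype.card F - 1) := ⟨by have := Fintype.one_lt_card (α := F); lia⟩
  rw [← Finset.sum_image (s := Finset.range (Fintype.card F - 1)) (g := (g ^ ·)) (f := f)
    fun i hi j hj h ↦ hg.pow_inj (Finset.mem_range.mp hi) (Finset.mem_range.mp hj) h]
  refine (Finset.sum_subset (Finset.subset_univ _) fun a _ ha ↦ ?_).symm
  obtain rfl | h0 := eq_or_ne a 0
  · exact hf
  · obtain ⟨k, hk, rfl⟩ := hg.eq_pow_of_pow_eq_one (FiniteField.pow_card_sub_one_eq_one a h0)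
    exact absurd (Finset.mem_image_of_mem _ (Finset.mem_range.mpr hk)) ha

/-- On a finite field `F` with primitive root `g`, every primitive `(#F - 1)`-th root of unity `β`
is the value at `g` of a multiplicative character of order `#F - 1`. -/
lemma MulChar.exists_apply_eq_and_orderOf_eq {F R : Type*} [Fintype F] [Field F] [CommRing R]
    {g : F} (hg : IsPrimitiveRoot g (Fintype.card F - 1))
    {β : R} (hβ : IsPrimitiveRoot β (Fintype.card F - 1)) :
    ∃ χ : MulChar F R, χ g = β ∧ orderOf χ = Fintype.card F - 1 := by
  classical
  have hcard : Fintype.card Fˣ = Fintype.card F - 1 := Fintype.card_units F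
  have hn : Fintype.card F - 1 ≠ 0 := hcard ▸ Fintype.card_ne_zero
  have : NeZero (Fintype.card F - 1) := ⟨hn⟩
  obtain ⟨g, rfl⟩ := hg.isUnit hn
  obtain ⟨β, rfl⟩ := hβ.isUnit hn
  rw [IsPrimitiveRoot.coe_units_iff] at hg hβ
  have hgen : ∀ x, x ∈ Subgroup.zpowers g := fun x ↦ by
    rw [hg.zpowers_eq, mem_rootsOfUnity, ← hcard, pow_card_eq_one]
  have hroot : β ∈ rootsOfUnity (Fintype.card Fˣ) R := by
    rw [mem_rootsOfUnity, hcard, hβ.pow_eq_one]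
  refine ⟨ofRootOfUnity hroot hgen, ofRootOfUnity_spec hroot hgen, ?_⟩
  rw [hβ.eq_orderOf]
  refine orderOf_eq_orderOf_iff.mpr fun m ↦ ?_
  rw [eq_iff hgen, pow_apply_coe, ofRootOfUnity_spec, one_apply_coe, ← Units.val_pow_eq_pow_val,
    Units.val_eq_one]

/-- The `(p−1)`-th power of the Lagrange resolvent of a prime cyclotomic equation is a
known quantity: for an odd prime `p`, a primitive `p`-th root of unity `ζ`, a primitive
`(p−1)`-th root of unity `β`, and a primitive root `g` modulo `p`, the quantity
`t = Σ_{k=0}^{p−2} β^k ζ^{g^k}` satisfies `t^{p−1} ∈ ℚ(β)`. -/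
theorem resolvent_power_mem_adjoin_beta (p : ℕ) (hp : p.Prime) (hodd : Odd p)
    (ζ β : ℂ) (hζ : IsPrimitiveRoot ζ p) (hβ : IsPrimitiveRoot β (p - 1))
    (g : ℕ) (hg : IsPrimitiveRoot (g : ZMod p) (p - 1)) :
    (∑ k ∈ Finset.range (p - 1), β ^ k * ζ ^ (g ^ k)) ^ (p - 1) ∈
      IntermediateField.adjoin ℚ {β} := by
  have : Fact p.Prime := ⟨hp⟩
  have hp3 : 2 ≤ p - 1 := by
    obtain ⟨m, rfl⟩ := hodd
    have := hp.two_le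
    lia
  have hcard : Fintype.card (ZMod p) - 1 = p - 1 := by rw [ZMod.card]
  obtain ⟨χ, hχg, hχ⟩ := MulChar.exists_apply_eq_and_orderOf_eq (hcard ▸ hg) (hcard ▸ hβ)
  rw [hcard] at hχ
  have hsum : gaussSum χ (AddChar.zmodChar p hζ.pow_eq_one) =
      ∑ k ∈ Finset.range (p - 1), β ^ k * ζ ^ (g ^ k) := by
    rw [gaussSum, (hcard ▸ hg : IsPrimitiveRoot (g : ZMod p) _).sum_eq_sum_range_pow
      (by simp [χ.map_zero]), hcard]
    refine Finset.sum_congr rfl fun k _ ↦ ?_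
    rw [map_pow, hχg, ← Nat.cast_pow, AddChar.zmodChar_apply']
  have hmem := gaussSum_pow_orderOf_mem_algebraAdjoin (hχ ▸ hp3)
    (AddChar.zmodChar_primitive_of_primitive_root p hζ) (hχ ▸ hβ)
  rw [hχ, hsum] at hmem
  have hle : Algebra.adjoin ℤ {β} ≤
      (IntermediateField.adjoin ℚ {β}).toSubalgebra.restrictScalars ℤ :=
    Algebra.adjoin_le (IntermediateField.subset_adjoin ℚ {β})
  exact hle hmem
end
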